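/- arXiv:cs/0402052 — 2 statements merged into one kernel-verified Lean document; each statement's English description precedes it below -/
import Mathlib

section
/- Let α be an irrational number with convergents p_j/q_j and partial quotients a_j, let c > 0, and let m ≥ -1 be the largest odd integer such that α < a/b ≤ p_m/q_m, where a, b are coprime integers with b > 0 satisfying |α - a/b| < c/b². Write a = r·p_{m+1} + s·p_m and b = r·q_{m+1} + s·q_m with integers r ≥ 0, s > 0. Then r² - s·r·a_{m+2} + c·a_{m+2} > 0. -/
/-! The inequality follows from the complete-quotient formula. Put `β = α_{m+2}` and
`D = β q_{m+1} + q_m`. Since `α D = β p_{m+1} + p_m` and, for odd `m`,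
`p_m q_{m+1} - p_{m+1} q_m = 1`, one gets `(a - b α) D = s β - r`, which is positive because
`α < a/b`. The approximation hypothesis then reads `b (s β - r) < c D`, and
`s β > r` gives `β b = β (r q_{m+1} + s q_m) ≥ r D`. Hence `r (s β - r) < c β`, that is
`r s - c < r² / β`; the claim follows on replacing `β` by `a_{m+2} = ⌊β⌋ ≤ β`. -/

/-- The Gauss-map orbit of `α`: `cfGauss α n` is the `n`-th complete quotient
`α_n` of the continued fraction expansion of `α` (`α_0 = α`,
`α_{n+1} = 1/(α_n - ⌊α_n⌋)`). -/
noncomputable def cfGauss (α : ℝ) : ℕ → ℝ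
  | 0 => α
  | n + 1 => 1 / Int.fract (cfGauss α n)

/-- The `n`-th partial quotient `a_n` of the continued fraction expansion of `α`
(so `cfA α 0 = ⌊α⌋`). -/
noncomputable def cfA (α : ℝ) (n : ℕ) : ℤ :=
  ⌊cfGauss α n⌋

/-- `cfP α (m + 1)` is the numerator `p_m` of the `m`-th convergent of the
continued fraction expansion of `α`; `cfP α 0 = p_{-1} = 1`, `cfP α 1 = p_0 = ⌊α⌋`,
and `p_i = a_i p_{i-1} + p_{i-2}`.  (For rational `α` the values stabilize once
the expansion terminates.) -/
noncomputable def cfP (α : ℝ) : ℕ → ℤ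
  | 0 => 1
  | 1 => ⌊α⌋
  | n + 2 =>
      if Int.fract (cfGauss α n) = 0 then cfP α (n + 1)
      else cfA α (n + 1) * cfP α (n + 1) + cfP α n

/-- `cfQ α (m + 1)` is the denominator `q_m` of the `m`-th convergent of the
continued fraction expansion of `α`; `cfQ α 0 = q_{-1} = 0`, `cfQ α 1 = q_0 = 1`,
and `q_i = a_i q_{i-1} + q_{i-2}`. -/
noncomputable def cfQ (α : ℝ) : ℕ → ℤ
  | 0 => 0
  | 1 => 1
  | n + 2 =>
      if Int.fract (cfGauss α n) = 0 then cfQ α (n + 1)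
      else cfA α (n + 1) * cfQ α (n + 1) + cfQ α n

theorem cfGauss_irrational {α : ℝ} (h : Irrational α) (n : ℕ) : Irrational (cfGauss α n) := by
  induction n with
  | zero => exact h
  | succ n ih =>
    have h1 : Irrational (Int.fract (cfGauss α n)) := by
      rw [Int.fract]
      exact ih.sub_intCast _
    simpa [cfGauss] using h1.inv

theorem fract_cfGauss_pos {α : ℝ} (h : Irrational α) (n : ℕ) :
    0 < Int.fract (cfGauss α n) :=
  Int.fract_pos.mpr fun he => (cfGauss_irrational h n).ne_int _ he

theorem one_lt_cfGauss_succ {α : ℝ} (h : Irrational α) (n : ℕ) :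
    1 < cfGauss α (n + 1) := by
  rw [cfGauss]
  exact one_lt_one_div (fract_cfGauss_pos h n) (Int.fract_lt_one _)

theorem cfP_add_two {α : ℝ} (h : Irrational α) (n : ℕ) :
    cfP α (n + 2) = cfA α (n + 1) * cfP α (n + 1) + cfP α n := by
  rw [cfP, if_neg (fract_cfGauss_pos h n).ne']

theorem cfQ_add_two {α : ℝ} (h : Irrational α) (n : ℕ) :
    cfQ α (n + 2) = cfA α (n + 1) * cfQ α (n + 1) + cfQ α n := by
  rw [cfQ, if_neg (fract_cfGauss_pos h n).ne']

theorem one_le_cfA_succ {α : ℝ} (h : Irrational α) (n : ℕ) : 1 ≤ cfA α (n + 1) :=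
  Int.le_floor.mpr (by simpa using (one_lt_cfGauss_succ h n).le)

theorem cfQ_nonneg_and_pos {α : ℝ} (h : Irrational α) (n : ℕ) :
    0 ≤ cfQ α n ∧ 0 < cfQ α (n + 1) := by
  induction n with
  | zero => simp [cfQ]
  | succ n ih =>
    refine ⟨ih.2.le, ?_⟩
    rw [cfQ_add_two h]
    have := one_le_cfA_succ h n
    nlinarith [ih.1, ih.2]

theorem cf_det {α : ℝ} (h : Irrational α) (n : ℕ) :
    cfP α n * cfQ α (n + 1) - cfP α (n + 1) * cfQ α n = (-1) ^ n := by
  induction n with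
  | zero => simp [cfP, cfQ]
  | succ n ih =>
    rw [cfP_add_two h, cfQ_add_two h, pow_succ, ← ih]
    ring

/-- `α` is the Möbius image of its complete quotient `α_{m+2}` (with `n = m + 1`). -/
theorem cf_complete_quotient {α : ℝ} (h : Irrational α) (n : ℕ) :
    α * (cfGauss α (n + 1) * cfQ α (n + 1) + cfQ α n)
      = cfGauss α (n + 1) * cfP α (n + 1) + cfP α n := by
  induction n with
  | zero =>
    have hf := (fract_cfGauss_pos h 0).ne'
    have he : (⌊α⌋ : ℝ) + Int.fract α = α := Int.floor_add_fract α
    simp only [cfGauss, cfP, cfQ] at hf ⊢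
    field_simp
    push_cast
    linarith
  | succ n ih =>
    have hf := (fract_cfGauss_pos h (n + 1)).ne'
    have he : (cfA α (n + 1) : ℝ) + Int.fract (cfGauss α (n + 1)) = cfGauss α (n + 1) :=
      Int.floor_add_fract _
    rw [cfP_add_two h, cfQ_add_two h, cfGauss]
    generalize Int.fract (cfGauss α (n + 1)) = f at *
    rw [← he] at ih
    push_cast
    field_simp
    linear_combination ih

/-- Let `α` be irrational, `c > 0`, and let `m ≥ -1` be the
largest odd integer such that `α < a/b ≤ p_m/q_m`, where `a`, `b` are coprime
integers, `b > 0`, `|α - a/b| < c/b²`.  Write `a = r p_{m+1} + s p_m`,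
`b = r q_{m+1} + s q_m` with `r ≥ 0`, `s > 0`.  Then
`r² - s r a_{m+2} + c a_{m+2} > 0`.
(Here the natural number `M` stands for `m + 1`; `m` odd and `m ≥ -1`
corresponds to `M` even.  The condition `a/b ≤ p_m/q_m` is stated in the
multiplied-out form `(a/b) q_m ≤ p_m`, which for `M = 0`, i.e. `m = -1`,
`p_{-1}/q_{-1} = 1/0 = ∞`, is automatically true, matching the paper's
convention.  `a_{m+2} = cfA α (M + 1)`.) -/
theorem quadratic_inequality_rs (α : ℝ) (hirr : Irrational α)
    (c : ℝ) (hc : 0 < c)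
    (a b : ℤ) (hab : IsCoprime a b) (hb : 0 < b)
    (happrox : |α - (a : ℝ) / b| < c / (b : ℝ) ^ 2)
    (M : ℕ) (hMeven : Even M)
    (hαab : α < (a : ℝ) / b)
    (hMle : (a : ℝ) / b * (cfQ α M : ℝ) ≤ (cfP α M : ℝ))
    (hMmax : ∀ M' : ℕ, Even M' → (a : ℝ) / b * (cfQ α M' : ℝ) ≤ (cfP α M' : ℝ) → M' ≤ M)
    (r s : ℤ) (hr : 0 ≤ r) (hs : 0 < s)
    (hA : a = r * cfP α (M + 1) + s * cfP α M)
    (hB : b = r * cfQ α (M + 1) + s * cfQ α M) :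
    (r : ℝ) ^ 2 - (s : ℝ) * (r : ℝ) * (cfA α (M + 1) : ℝ) + c * (cfA α (M + 1) : ℝ) > 0 := by
  have hdet : (cfP α M : ℝ) * cfQ α (M + 1) - cfP α (M + 1) * cfQ α M = 1 := by
    have := cf_det hirr M
    rw [hMeven.neg_one_pow] at this
    exact_mod_cast this
  have hcq := cf_complete_quotient hirr M
  have hβ := one_lt_cfGauss_succ hirr M
  have hAβ : (cfA α (M + 1) : ℝ) ≤ cfGauss α (M + 1) := Int.floor_le _
  have hA1 : (1 : ℝ) ≤ cfA α (M + 1) := by exact_mod_cast one_le_cfA_succ hirr M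
  have hQ : (0 : ℝ) ≤ cfQ α M := by exact_mod_cast (cfQ_nonneg_and_pos hirr M).1
  have hQ' : (0 : ℝ) < cfQ α (M + 1) := by exact_mod_cast (cfQ_nonneg_and_pos hirr M).2
  have hbR : (0 : ℝ) < b := by exact_mod_cast hb
  have hA' : (a : ℝ) = r * cfP α (M + 1) + s * cfP α M := by exact_mod_cast hA
  have hB' : (b : ℝ) = r * cfQ α (M + 1) + s * cfQ α M := by exact_mod_cast hB
  generalize cfGauss α (M + 1) = β at *
  generalize (cfA α (M + 1) : ℝ) = A at *
  have hpos : 0 < (a : ℝ) - b * α := by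
    rw [lt_div_iff₀ hbR] at hαab
    linarith
  have hlt : (b : ℝ) * (a - b * α) < c := by
    rw [abs_of_neg (by linarith), lt_div_iff₀ (by positivity)] at happrox
    calc (b : ℝ) * (a - b * α) = -(α - a / b) * b ^ 2 := by field_simp; ring
      _ < c := happrox
  obtain ⟨D, hD⟩ : ∃ D : ℝ, D = β * cfQ α (M + 1) + cfQ α M := ⟨_, rfl⟩
  have hDpos : 0 < D := by rw [hD]; positivity
  have hkey : ((a : ℝ) - b * α) * D = s * β - r := by
    rw [← hD] at hcq
    have : ((a : ℝ) - b * α) * D = a * D - b * (α * D) := by ring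
    rw [this, hcq, hD, hA', hB']
    linear_combination (s * β - r) * hdet
  have hsβ : 0 < s * β - r := hkey ▸ mul_pos hpos hDpos
  have hbD : (r : ℝ) * D ≤ β * b := by
    rw [hD, hB']
    nlinarith [mul_nonneg hsβ.le hQ]
  have hmain : (r : ℝ) * (s * β - r) < c * β := by
    have h1 : (b : ℝ) * (s * β - r) < c * D := by
      rw [← hkey, ← mul_assoc]
      exact mul_lt_mul_of_pos_right hlt hDpos
    have h2 : (r : ℝ) * (s * β - r) * D < c * β * D := by
      calc (r : ℝ) * (s * β - r) * D = r * D * (s * β - r) := by ring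
        _ ≤ β * b * (s * β - r) := mul_le_mul_of_nonneg_right hbD hsβ.le
        _ = β * (b * (s * β - r)) := by ring
        _ < β * (c * D) := mul_lt_mul_of_pos_left h1 (by linarith)
        _ = c * β * D := by ring
    exact lt_of_mul_lt_mul_right h2 hDpos.le
  have hfin : 0 < β * ((r : ℝ) ^ 2 - s * r * A + c * A) := by
    have h3 : (r : ℝ) ^ 2 * A ≤ r ^ 2 * β := mul_le_mul_of_nonneg_left hAβ (sq_nonneg _)
    nlinarith [mul_lt_mul_of_pos_left hmain (show 0 < A by linarith)]
  exact pos_of_mul_pos_right hfin (by linarith)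
end

section
/- In the RSA setting with n > 10⁸, let p_j/q_j and a_j be the convergents and partial quotients of e/n, let m be the largest odd integer with p_m/q_m > e/n + 2.122·e/(n√n), and set D = d/n^{1/4}. Assume p_{m+2}/q_{m+2} ≥ k/d, and define r' = d·q_{m+2}·(p_{m+2}/q_{m+2} - k/d) and s' = d·q_{m+3}·(k/d - p_{m+3}/q_{m+3}). Then r' < (0.061·√(2.122·(a_{m+3}+2))/a_{m+3})·D, s' < √(2.122·(a_{m+3}+2))·D, and hence r'·s' < 0.3885·D². -/
lemma one_le_cfA (α : ℝ) (N : ℕ) (h0 : Int.fract (cfGauss α N) ≠ 0) : 1 ≤ cfA α (N + 1) := by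
  unfold cfA
  rw [Int.le_floor, Int.cast_one]
  have hpos : 0 < Int.fract (cfGauss α N) := lt_of_le_of_ne (Int.fract_nonneg _) (Ne.symm h0)
  exact (one_le_div hpos).2 (Int.fract_lt_one _).le

/-- The continued fraction identities at an index where the expansion has not stopped:
monotonicity of denominators, the determinant identity, and the expression of `α` by the next
complete quotient. -/
lemma cf_main (α : ℝ) (N : ℕ) : Int.fract (cfGauss α N) ≠ 0 →
    0 ≤ cfQ α N ∧ cfQ α N ≤ cfQ α (N + 1) ∧ 1 ≤ cfQ α (N + 1) ∧
    cfP α (N + 1) * cfQ α N - cfP α N * cfQ α (N + 1) = (-1) ^ (N + 1) ∧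
    α * (cfGauss α (N + 1) * cfQ α (N + 1) + cfQ α N) =
      cfGauss α (N + 1) * cfP α (N + 1) + cfP α N := by
  induction N with
  | zero =>
    intro h
    refine ⟨by simp [cfQ], by simp [cfQ], by simp [cfQ], by simp [cfQ, cfP], ?_⟩
    simp only [cfGauss] at h
    have h2 := Int.self_sub_floor α
    simp only [cfGauss, cfQ, cfP]
    push_cast
    field_simp
    linarith
  | succ N ih =>
    intro h
    -- A vanishing fractional part at `N` would give `cfGauss α (N + 1) = 1 / 0 = 0`.
    have h0 : Int.fract (cfGauss α N) ≠ 0 := by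
      intro h0
      apply h
      simp [cfGauss, h0]
    obtain ⟨h1, h2, h3, h4, h5⟩ := ih h0
    have hA := one_le_cfA α N h0
    have hQ : cfQ α (N + 1 + 1) = cfA α (N + 1) * cfQ α (N + 1) + cfQ α N := by
      rw [cfQ, if_neg h0]
    have hP : cfP α (N + 1 + 1) = cfA α (N + 1) * cfP α (N + 1) + cfP α N := by
      rw [cfP, if_neg h0]
    refine ⟨by linarith, by rw [hQ]; nlinarith, by rw [hQ]; nlinarith, ?_, ?_⟩
    · rw [hQ, hP, pow_succ, ← h4]
      ring
    · have hg : cfGauss α (N + 1 + 1) = 1 / Int.fract (cfGauss α (N + 1)) := rfl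
      have hf : cfGauss α (N + 1) = cfA α (N + 1) + Int.fract (cfGauss α (N + 1)) :=
        (Int.floor_add_fract _).symm
      rw [hg, hQ, hP]
      set f := Int.fract (cfGauss α (N + 1))
      rw [hf] at h5
      push_cast
      field_simp
      linear_combination h5

/-- Once the expansion has stopped, the (constant) convergent equals `α`. -/
lemma cf_terminated (α : ℝ) (N : ℕ) : Int.fract (cfGauss α N) = 0 →
    α * cfQ α (N + 1) = cfP α (N + 1) ∧ 1 ≤ cfQ α (N + 1) := by
  induction N with
  | zero =>
    intro h
    have h2 := Int.self_sub_floor α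
    simp only [cfGauss] at h
    simp only [cfQ, cfP, Int.cast_one, mul_one]
    exact ⟨by linarith, le_rfl⟩
  | succ N ih =>
    intro h
    by_cases h0 : Int.fract (cfGauss α N) = 0
    · rw [cfQ, cfP, if_pos h0, if_pos h0]
      exact ih h0
    · obtain ⟨h1, h2, h3, h4, h5⟩ := cf_main α N h0
      have hA := one_le_cfA α N h0
      have hf : cfGauss α (N + 1) = cfA α (N + 1) := by
        have := Int.floor_add_fract (cfGauss α (N + 1))
        rw [h, add_zero] at this
        exact this.symm
      rw [cfQ, cfP, if_neg h0, if_neg h0]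
      rw [hf] at h5
      refine ⟨by push_cast; exact h5, by nlinarith⟩

/-- The RSA key equation forces `k/d` to exceed `e/n` by almost `2 e / (n √n)`; the constant
`1.9998` is `2 - 2 / 10⁴`. -/
lemma rsa_gap (p q n e d k : ℕ) (hp : p.Prime) (hq : q.Prime) (hn : n = p * q)
    (hbig : n > 10 ^ 8) (hd : 0 < d) (hk : 0 < k)
    (hkey : e * d = k * ((p - 1) * (q - 1)) + 1) (S : ℝ) (hS : 10 ^ 4 < S) (hSn : S ^ 2 = n) :
    1.9998 * ((e : ℝ) / n) / S ≤ (k : ℝ) / d - (e : ℝ) / n := by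
  have hp2 : (2 : ℝ) ≤ p := by exact_mod_cast hp.two_le
  have hq2 : (2 : ℝ) ≤ q := by exact_mod_cast hq.two_le
  have hk1 : (1 : ℝ) ≤ k := by exact_mod_cast hk
  have hd0 : (0 : ℝ) < d := by exact_mod_cast hd
  have hn0 : (0 : ℝ) < n := by exact_mod_cast (by omega : 0 < n)
  have hnR : (n : ℝ) = p * q := by exact_mod_cast hn
  have key : (e : ℝ) * d = k * ((p - 1) * (q - 1)) + 1 := by
    have := congrArg (Nat.cast : ℕ → ℝ) hkey
    push_cast [Nat.cast_sub hp.one_le, Nat.cast_sub hq.one_le] at this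
    exact this
  have hsum : 2 * S ≤ p + q := by
    apply le_of_sq_le_sq _ (by positivity)
    nlinarith [sq_nonneg ((p : ℝ) - q)]
  have h1 : (k : ℝ) * (2 * S - 2) ≤ k * n - e * d := by
    rw [key, hnR]
    nlinarith
  have h2 : (e : ℝ) * d ≤ k * n := by nlinarith
  have h3 : (e : ℝ) * d * (1.9998 * S) ≤ (k * n - e * d) * S ^ 2 := by
    calc (e : ℝ) * d * (1.9998 * S) ≤ k * n * (1.9998 * S) := by gcongr
      _ ≤ k * n * (2 * S - 2) := by gcongr; linarith
      _ = k * (2 * S - 2) * S ^ 2 := by rw [hSn]; ring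
      _ ≤ _ := by gcongr
  have hS0 : 0 < S := by linarith
  rw [div_sub_div _ _ hd0.ne' hn0.ne', mul_div_assoc', div_div, div_le_div_iff₀ (by positivity)
    (by positivity)]
  have h4 : (e : ℝ) * d * 1.9998 ≤ (k * n - e * d) * S := by
    have : ((e : ℝ) * d * 1.9998) * S ≤ ((k * n - e * d) * S) * S := by nlinarith
    exact le_of_mul_le_mul_right this hS0
  nlinarith [mul_le_mul_of_nonneg_left h4 hn0.le]

/-- The real-arithmetic core: `P/x` and `P'/y` are consecutive convergents of `α` with
`y = a x + w`, `g` is the complete quotient with integer part `a`, `κ` is the approximated fraction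
`k/d`, and `t` is the fourth root of `n`. -/
lemma core_bounds (α κ t d x w P V g a : ℝ) (hα0 : 0 < α) (hα1 : α < 1) (ht : 0 < t)
    (hd : 0 < d) (hx : 1 ≤ x) (hw : 0 ≤ w) (hwx : w ≤ x) (ha : 1 ≤ a) (hag : a ≤ g)
    (hga : g < a + 1) (hdet : P * w - V * x = 1) (hid : α * (g * x + w) = g * P + V)
    (hgap : 1.9998 * α / t ^ 2 ≤ κ - α) (hle : P / x ≤ α + 2.122 * α / t ^ 2)
    (hcase : κ ≤ P / x) :
    d * x * (P / x - κ) < 0.061 * √(2.122 * (a + 2)) / a * (d / t) ∧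
    d * (a * x + w) * (κ - (a * P + V) / (a * x + w)) < √(2.122 * (a + 2)) * (d / t) ∧
    d * x * (P / x - κ) * (d * (a * x + w) * (κ - (a * P + V) / (a * x + w))) <
      0.3885 * (d / t) ^ 2 := by
  have hx0 : 0 < x := by linarith
  have ha0 : 0 < a := by linarith
  have hy0 : 0 < a * x + w := by positivity
  have hz0 : 0 < g * x + w := by nlinarith
  have hκα : α < κ := by
    have : 0 < 1.9998 * α / t ^ 2 := by positivity
    linarith
  have e1 : P / x - α = 1 / (x * (g * x + w)) := by
    have : α = (g * P + V) / (g * x + w) := by rw [eq_div_iff hz0.ne', hid]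
    rw [this, div_sub_div _ _ hx0.ne' hz0.ne']
    congr 1
    linear_combination hdet
  have e2 : P / x - (a * P + V) / (a * x + w) = 1 / (x * (a * x + w)) := by
    rw [div_sub_div _ _ hx0.ne' hy0.ne']
    congr 1
    linear_combination hdet
  have e3 : (a * P + V) / (a * x + w) ≤ α := by
    rw [div_le_iff₀ hy0]
    have hPx : 0 ≤ P - α * x := by
      have : α ≤ P / x := by linarith
      rw [le_div_iff₀ hx0] at this
      linarith
    nlinarith [mul_nonneg (sub_nonneg.2 hag) hPx]
  have hxy : 1.9998 * α * (x * (a * x + w)) ≤ t ^ 2 := by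
    have : 1.9998 * α / t ^ 2 ≤ 1 / (x * (a * x + w)) := by linarith
    rw [div_le_div_iff₀ (by positivity) (by positivity)] at this
    linarith
  have hxz : t ^ 2 ≤ 2.122 * α * (x * (g * x + w)) := by
    have : 1 / (x * (g * x + w)) ≤ 2.122 * α / t ^ 2 := by linarith
    rw [div_le_div_iff₀ (by positivity) (by positivity)] at this
    linarith
  set R := √(2.122 * (a + 2)) with hR
  have hR2 : R ^ 2 = 2.122 * (a + 2) := Real.sq_sqrt (by positivity)
  have hR0 : 0 < R := Real.sqrt_pos.2 (by positivity)
  have hr : d * x * (P / x - κ) < 0.061 * R / a * (d / t) := by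
    have b1 : P / x - κ ≤ 0.1222 * α / t ^ 2 := by
      have : 0.1222 * α / t ^ 2 = 2.122 * α / t ^ 2 - 1.9998 * α / t ^ 2 := by ring
      linarith
    have b2 : a * x * (0.1222 * α) < 0.061 * R * t := by
      apply lt_of_pow_lt_pow_left₀ 2 (by positivity)
      have c1 : 1.9998 * (a * x ^ 2 * α) ≤ t ^ 2 := by
        nlinarith [mul_nonneg (mul_nonneg hα0.le hx0.le) hw]
      calc (a * x * (0.1222 * α)) ^ 2 = 0.1222 ^ 2 * (a * α) * (a * x ^ 2 * α) := by ring
        _ ≤ 0.1222 ^ 2 * (a * 1) * (t ^ 2 / 1.9998) := by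
          gcongr
          rw [le_div_iff₀ (by norm_num)]
          linarith
        _ < 0.061 ^ 2 * (2.122 * (a + 2)) * t ^ 2 := by
          rw [mul_div_assoc', mul_div_right_comm]
          gcongr
          rw [div_lt_iff₀ (by norm_num)]
          norm_num
          linarith
        _ = (0.061 * R * t) ^ 2 := by rw [← hR2]; ring
    calc d * x * (P / x - κ) ≤ d * x * (0.1222 * α / t ^ 2) := by gcongr
      _ = a * x * (0.1222 * α) * (d / (a * t ^ 2)) := by field_simp
      _ < 0.061 * R * t * (d / (a * t ^ 2)) := by gcongr
      _ = _ := by field_simp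
  have hs : d * (a * x + w) * (κ - (a * P + V) / (a * x + w)) < R * (d / t) := by
    have b2 : t < R * x := by
      apply lt_of_pow_lt_pow_left₀ 2 (by positivity)
      calc t ^ 2 ≤ 2.122 * α * (x * (g * x + w)) := hxz
        _ < 2.122 * 1 * (x * (g * x + w)) := by gcongr
        _ ≤ 2.122 * 1 * (x * ((a + 1) * x + x)) := by gcongr
        _ = (R * x) ^ 2 := by rw [mul_pow, hR2]; ring
    calc d * (a * x + w) * (κ - (a * P + V) / (a * x + w))
        ≤ d * (a * x + w) * (1 / (x * (a * x + w))) := by gcongr; linarith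
      _ = d / x := by field_simp
      _ < R * (d / t) := by
        rw [mul_div_assoc', div_lt_div_iff₀ hx0 ht]
        nlinarith
  refine ⟨hr, hs, ?_⟩
  have hr0 : 0 ≤ d * x * (P / x - κ) := mul_nonneg (by positivity) (by linarith)
  have hs0 : 0 ≤ d * (a * x + w) * (κ - (a * P + V) / (a * x + w)) :=
    mul_nonneg (by positivity) (by linarith)
  have hDt : 0 < d / t := by positivity
  calc _ < (0.061 * R / a * (d / t)) * (R * (d / t)) := mul_lt_mul'' hr hs hr0 hs0
    _ = 0.061 * (2.122 * (a + 2)) / a * (d / t) ^ 2 := by rw [← hR2]; ring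
    _ ≤ 0.3885 * (d / t) ^ 2 := by
      gcongr
      rw [div_le_iff₀ ha0]
      linarith

/-- In the RSA setting with `n > 10⁸`, let `p_j/q_j`, `a_j`
be the convergents and partial quotients of `e/n`, let `m` be the largest odd
integer with `p_m/q_m > e/n + 2.122 e/(n√n)`, and `D = d/n^{1/4}`.  Assume
`p_{m+2}/q_{m+2} ≥ k/d`, and define `r' = d q_{m+2} (p_{m+2}/q_{m+2} - k/d)`,
`s' = d q_{m+3} (k/d - p_{m+3}/q_{m+3})`.  Then
`r' < (0.061 √(2.122 (a_{m+3} + 2)) / a_{m+3}) D`,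
`s' < √(2.122 (a_{m+3} + 2)) D`, and `r' s' < 0.3885 D²`.
(Here `p_{m+2} = cfP (e/n) (m + 3)`, `p_{m+3} = cfP (e/n) (m + 4)`,
`a_{m+3} = cfA (e/n) (m + 3)`.) -/
theorem new_variant_bounds (p q n e d k : ℕ) (hp : p.Prime) (hq : q.Prime)
    (hpq : p < q) (hqp : q < 2 * p) (hn : n = p * q) (hbig : n > 10 ^ 8)
    (he : 0 < e) (hd : 0 < d) (hk : 0 < k) (hen : e < n)
    (hkd : Nat.Coprime k d)
    (hkey : e * d = k * ((p - 1) * (q - 1)) + 1)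
    (m : ℕ) (hmodd : Odd m)
    (hm : (cfP ((e : ℝ) / n) (m + 1) : ℝ) / (cfQ ((e : ℝ) / n) (m + 1) : ℝ) > (e : ℝ) / n + 2.122 * e / ((n : ℝ) * Real.sqrt n))
    (hmax : ∀ m' : ℕ, Odd m' → ((cfP ((e : ℝ) / n) (m' + 1) : ℝ) / (cfQ ((e : ℝ) / n) (m' + 1) : ℝ) > (e : ℝ) / n + 2.122 * e / ((n : ℝ) * Real.sqrt n)) → m' ≤ m)
    (D : ℝ) (hD : D = (d : ℝ) / (n : ℝ) ^ ((1 : ℝ) / 4))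
    (hcase : (cfP ((e : ℝ) / n) (m + 3) : ℝ) / (cfQ ((e : ℝ) / n) (m + 3) : ℝ) ≥ (k : ℝ) / d)
    (r' s' : ℝ)
    (hr' : r' = (d : ℝ) * (cfQ ((e : ℝ) / n) (m + 3) : ℝ) *
      ((cfP ((e : ℝ) / n) (m + 3) : ℝ) / (cfQ ((e : ℝ) / n) (m + 3) : ℝ) - (k : ℝ) / d))
    (hs' : s' = (d : ℝ) * (cfQ ((e : ℝ) / n) (m + 4) : ℝ) *
      ((k : ℝ) / d - (cfP ((e : ℝ) / n) (m + 4) : ℝ) / (cfQ ((e : ℝ) / n) (m + 4) : ℝ))) :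
    r' < 0.061 * Real.sqrt (2.122 * ((cfA ((e : ℝ) / n) (m + 3) : ℝ) + 2)) /
        (cfA ((e : ℝ) / n) (m + 3) : ℝ) * D ∧
      s' < Real.sqrt (2.122 * ((cfA ((e : ℝ) / n) (m + 3) : ℝ) + 2)) * D ∧
      r' * s' < 0.3885 * D ^ 2 := by
  have hn0 : (0 : ℝ) < n := by exact_mod_cast (by omega : 0 < n)
  have hnR : (10 : ℝ) ^ 8 < n := by exact_mod_cast hbig
  have he0 : (0 : ℝ) < e := by exact_mod_cast he
  have hd0 : (0 : ℝ) < d := by exact_mod_cast hd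
  have hα0 : (0 : ℝ) < (e : ℝ) / n := by positivity
  have hα1 : (e : ℝ) / n < 1 := by
    rw [div_lt_one hn0]
    exact_mod_cast hen
  set t : ℝ := (n : ℝ) ^ ((1 : ℝ) / 4) with ht
  have ht0 : 0 < t := Real.rpow_pos_of_pos hn0 _
  have htS : t ^ 2 = √(n : ℝ) := by
    rw [ht, ← Real.rpow_natCast, ← Real.rpow_mul hn0.le, Real.sqrt_eq_rpow]
    norm_num
  have hS : (10 : ℝ) ^ 4 < √(n : ℝ) := by
    apply Real.lt_sqrt_of_sq_lt
    linarith
  have hgap := rsa_gap p q n e d k hp hq hn hbig hd hk hkey _ hS (Real.sq_sqrt hn0.le)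
  have hnot := mt (hmax (m + 2) (by simpa [Nat.odd_add] using hmodd)) (by omega)
  have hδ : 2.122 * (e : ℝ) / ((n : ℝ) * √(n : ℝ)) = 2.122 * ((e : ℝ) / n) / √(n : ℝ) := by
    field_simp
  rw [hδ] at hnot
  generalize (e : ℝ) / n = α at *
  rw [show m + 2 + 1 = m + 3 from rfl, gt_iff_lt, not_lt] at hnot
  have hfr : Int.fract (cfGauss α (m + 2)) ≠ 0 := by
    intro h
    obtain ⟨h1, h2⟩ := cf_terminated α (m + 2) h
    have h3 : (0 : ℝ) < cfQ α (m + 3) := by exact_mod_cast h2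
    have h4 : (cfP α (m + 3) : ℝ) / cfQ α (m + 3) = α := by
      rw [div_eq_iff h3.ne']
      exact h1.symm
    rw [h4] at hcase
    have : 0 < 1.9998 * α / √(n : ℝ) := by positivity
    linarith
  obtain ⟨h1, h2, h3, h4, h5⟩ := cf_main α (m + 2) hfr
  rw [show m + 2 + 1 = m + 3 from rfl] at h2 h3 h4 h5
  have heven : Even (m + 3) := by
    obtain ⟨c, rfl⟩ := hmodd
    exact ⟨c + 2, by ring⟩
  rw [heven.neg_one_pow] at h4
  have hA : 1 ≤ cfA α (m + 3) := one_le_cfA α (m + 2) hfr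
  have hQ : (cfQ α (m + 4) : ℝ) = cfA α (m + 3) * cfQ α (m + 3) + cfQ α (m + 2) := by
    rw [cfQ, if_neg hfr]
    push_cast
    rfl
  have hP : (cfP α (m + 4) : ℝ) = cfA α (m + 3) * cfP α (m + 3) + cfP α (m + 2) := by
    rw [cfP, if_neg hfr]
    push_cast
    rfl
  rw [hr', hs', hD, hQ, hP]
  exact core_bounds α ((k : ℝ) / d) t d (cfQ α (m + 3)) (cfQ α (m + 2)) (cfP α (m + 3))
    (cfP α (m + 2)) (cfGauss α (m + 3)) (cfA α (m + 3)) hα0 hα1 ht0 hd0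
    (by exact_mod_cast h3) (by exact_mod_cast h1) (by exact_mod_cast h2) (by exact_mod_cast hA)
    (Int.floor_le _) (Int.lt_floor_add_one _) (by exact_mod_cast h4) h5
    (by rw [htS]; exact hgap) (by rw [htS]; exact hnot) hcase
end
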